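/- Let k ≥ 2 be an integer, ε ∈ {1, −1}, and δ(x, y) = x² + ε·y^{k+1} (an A_k-type singular impasse curve). Let X = (P, Q) be real-analytic on a neighborhood of the origin in ℝ² with P(0,0) ≠ 0. Then the constrained system (X, δ) is orientation-preserving C⁰-orbitally equivalent at (0, 0) to the constrained system (Y, δ), where Y is the constant vector field Y ≡ (P(0,0), Q(0,0)). -/

import Mathlib

/-- A phase curve of the vector field `X` in the set `V`: a differentiable curve
`c : J → V` on a nondegenerate interval `J` with `c'(t) = X(c(t))` for all `t ∈ J`. -/
def IsPhaseCurve (X : ℝ × ℝ → ℝ × ℝ) (V : Set (ℝ × ℝ)) (J : Set ℝ) (c : ℝ → ℝ × ℝ) : Prop :=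
  J.OrdConnected ∧ J.Nontrivial ∧ (∀ t ∈ J, c t ∈ V) ∧
    ∀ t ∈ J, HasDerivWithinAt c (X (c t)) J t

/-- The planar constrained systems `(X, δ)` and `(Y, γ)` are orientation-preserving
`C⁰`-orbitally equivalent at `(p₁, p₂)`: there are open neighborhoods `V₁ ∋ p₁`, `V₂ ∋ p₂`
and a homeomorphism `Φ : V₁ → V₂` sending `p₁` to `p₂` and impasse set to impasse set, which
carries phase curves of `X` off the impasse set onto phase curves of `Y` off the impasse set
up to continuous strictly increasing reparametrizations, and conversely for `Φ⁻¹`. -/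
def OrbitallyEquivAt (X : ℝ × ℝ → ℝ × ℝ) (δ : ℝ × ℝ → ℝ) (p₁ : ℝ × ℝ)
    (Y : ℝ × ℝ → ℝ × ℝ) (γ : ℝ × ℝ → ℝ) (p₂ : ℝ × ℝ) : Prop :=
  ∃ (V₁ V₂ : Set (ℝ × ℝ)) (Φ Φinv : ℝ × ℝ → ℝ × ℝ),
    IsOpen V₁ ∧ IsOpen V₂ ∧ p₁ ∈ V₁ ∧ p₂ ∈ V₂ ∧
    -- Φ is a homeomorphism from V₁ onto V₂ with inverse Φinv
    ContinuousOn Φ V₁ ∧ ContinuousOn Φinv V₂ ∧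
    Set.MapsTo Φ V₁ V₂ ∧ Set.MapsTo Φinv V₂ V₁ ∧
    (∀ z ∈ V₁, Φinv (Φ z) = z) ∧ (∀ z ∈ V₂, Φ (Φinv z) = z) ∧
    Φ p₁ = p₂ ∧
    -- Φ maps the impasse set to the impasse set
    Φ '' ({z | δ z = 0} ∩ V₁) = {z | γ z = 0} ∩ V₂ ∧
    -- Φ maps phase curves of X to phase curves of Y, preserving orientation
    (∀ (J : Set ℝ) (c : ℝ → ℝ × ℝ),
      IsPhaseCurve X (V₁ \ {z | δ z = 0}) J c →
      ∃ (J' : Set ℝ) (d : ℝ → ℝ × ℝ) (τ : ℝ → ℝ),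
        IsPhaseCurve Y (V₂ \ {z | γ z = 0}) J' d ∧
        ContinuousOn τ J ∧ StrictMonoOn τ J ∧ τ '' J = J' ∧
        ∀ t ∈ J, Φ (c t) = d (τ t)) ∧
    -- Φ⁻¹ maps phase curves of Y to phase curves of X, preserving orientation
    (∀ (J : Set ℝ) (d : ℝ → ℝ × ℝ),
      IsPhaseCurve Y (V₂ \ {z | γ z = 0}) J d →
      ∃ (J' : Set ℝ) (c : ℝ → ℝ × ℝ) (τ : ℝ → ℝ),
        IsPhaseCurve X (V₁ \ {z | δ z = 0}) J' c ∧
        ContinuousOn τ J ∧ StrictMonoOn τ J ∧ τ '' J = J' ∧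
        ∀ t ∈ J, Φinv (d t) = c (τ t))

/-! Near the origin the orbits of `X = (P, Q)` are the leaves of `y' = Q / P`, and the map
`(x, h) ↦ (x, u (x, h))`, where `u (·, h)` is the leaf through `(0, h)`, turns horizontal lines
into leaves. Off the vertical axis the impasse set is the pair of branches `|x| = a y`, where `a`
has strict derivative `0` at the origin, so that along each leaf `x ↦ a (u (x, h))` is a
contraction. Hence a homeomorphism sliding points along the horizontal lines brings the branches
pulled back by the leaf chart to `|x| = a h`. In the resulting coordinates the impasse set is the
original one and the orbits are horizontal, oriented by the sign of `P (0, 0)`; since nothing else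
depends on `X`, two systems with the same impasse set and the same sign are equivalent. -/

section ImpasseBranches

open Filter Topology
open scoped NNReal

lemma hasStrictFDerivAt_zero_comp_lipschitzWith {E F G : Type*}
    [NormedAddCommGroup E] [NormedSpace ℝ E] [NormedAddCommGroup F] [NormedSpace ℝ F]
    [NormedAddCommGroup G] [NormedSpace ℝ G] {f : F → G} {g : E → F} {K : ℝ≥0} {x : E}
    (hf : HasStrictFDerivAt f (0 : F →L[ℝ] G) (g x)) (hg : LipschitzWith K g) :
    HasStrictFDerivAt (f ∘ g) (0 : E →L[ℝ] G) x := by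
  simp only [hasStrictFDerivAt_iff_isLittleO, zero_apply, sub_zero] at hf ⊢
  have hg_prod : Tendsto (Prod.map g g) (𝓝 (x, x)) (𝓝 (g x, g x)) :=
    (hg.continuous.prodMap hg.continuous).tendsto (x, x)
  exact (hf.comp_tendsto hg_prod).trans_isBigO
    (.of_bound K <| .of_forall fun p => hg.norm_sub_le p.1 p.2)

lemma hasStrictDerivAt_abs_rpow_zero {p : ℝ} (hp : 1 < p) :
    HasStrictDerivAt (fun y : ℝ => |y| ^ p) 0 0 := by
  have h := (contDiff_norm_rpow (E := ℝ) hp).contDiffAt.hasStrictDerivAt one_ne_zero (x := 0)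
  simp only [Real.norm_eq_abs, (hasDerivAt_abs_rpow 0 hp).deriv, mul_zero] at h
  exact h

/-- `m` is one of the retractions of the line onto `ℝ`, `[0, ∞)`, `(-∞, 0]` or `{0}`, depending on
the sign of `c` and the parity of `n`. -/
lemma exists_lipschitzWith_max_mul_pow_eq (c : ℝ) {n : ℕ} (hn : n ≠ 0) :
    ∃ m : ℝ → ℝ, LipschitzWith 1 m ∧ m 0 = 0 ∧ ∀ y, max (c * y ^ n) 0 = |c| * |m y| ^ n := by
  have hzero : LipschitzWith 1 fun _ : ℝ => (0 : ℝ) := (LipschitzWith.const 0).weaken zero_le_one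
  rcases le_total 0 c with hc | hc <;> rcases n.even_or_odd with hn' | hn'
  · refine ⟨id, .id, rfl, fun y => ?_⟩
    rw [id, hn'.pow_abs, abs_of_nonneg hc, max_eq_left (mul_nonneg hc (hn'.pow_nonneg y))]
  · refine ⟨fun y => max y 0, LipschitzWith.id.max_const 0, max_self 0, fun y => ?_⟩
    rcases le_total 0 y with hy | hy
    · simp [abs_of_nonneg, hc, hy, mul_nonneg, pow_nonneg]
    · simp [abs_of_nonneg, hc, hy, hn, mul_nonpos_of_nonneg_of_nonpos hc (hn'.pow_nonpos hy)]
  · refine ⟨fun _ => 0, hzero, rfl, fun y => ?_⟩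
    simp [hn, mul_nonpos_of_nonpos_of_nonneg hc (hn'.pow_nonneg y)]
  · refine ⟨fun y => min y 0, LipschitzWith.id.min_const 0, min_self 0, fun y => ?_⟩
    rcases le_total 0 y with hy | hy
    · simp [hy, hn, mul_nonpos_of_nonpos_of_nonneg hc (pow_nonneg hy n)]
    · simp only [min_eq_left hy, abs_of_nonpos hc, abs_of_nonpos hy, hn'.neg_pow, neg_mul_neg]
      exact max_eq_left (mul_nonneg_of_nonpos_of_nonpos hc (hn'.pow_nonpos hy))

lemma hasStrictDerivAt_sqrt_max_mul_pow (c : ℝ) {n : ℕ} (hn : 3 ≤ n) :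
    HasStrictDerivAt (fun y : ℝ => √(max (c * y ^ n) 0)) 0 0 := by
  obtain ⟨m, hm, hm0, hmax⟩ := exists_lipschitzWith_max_mul_pow_eq c (n := n) (by omega)
  have hsqrt (y : ℝ) : √(max (c * y ^ n) 0) = √|c| * |m y| ^ ((n : ℝ) / 2) := by
    rw [hmax, Real.sqrt_mul (abs_nonneg c), Real.sqrt_eq_rpow (|m y| ^ n),
      ← Real.rpow_natCast, ← Real.rpow_mul (abs_nonneg _), mul_one_div]
  have hn' : 1 < (n : ℝ) / 2 := by
    have : (3 : ℝ) ≤ n := mod_cast hn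
    linarith
  have hpow : HasStrictFDerivAt (fun y : ℝ => |y| ^ ((n : ℝ) / 2)) (0 : ℝ →L[ℝ] ℝ) (m 0) := by
    simpa [hm0] using (hasStrictDerivAt_abs_rpow_zero hn').hasStrictFDerivAt
  have hcomp := (hasStrictFDerivAt_zero_comp_lipschitzWith hpow hm).hasStrictDerivAt.const_mul √|c|
  rw [zero_apply, mul_zero] at hcomp
  exact hcomp.congr_of_eventuallyEq (.of_forall fun y => (hsqrt y).symm)

lemma sq_add_eq_zero_iff_abs_eq_sqrt {x : ℝ} (hx : x ≠ 0) (q : ℝ) :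
    x ^ 2 + q = 0 ↔ |x| = √(max (-q) 0) := by
  rw [eq_comm (b := √_), Real.sqrt_eq_iff_mul_self_eq_of_pos (abs_pos.2 hx), abs_mul_abs_self]
  rcases le_total (-q) 0 with hq | hq
  · rw [max_eq_right hq]
    constructor <;> intro h <;> nlinarith [sq_pos_of_ne_zero hx]
  · rw [max_eq_left hq]
    constructor <;> intro h <;> nlinarith

end ImpasseBranches

section FiberwiseMonotone

open Set Filter Topology

variable {α β γ : Type*}
  [ConditionallyCompleteLinearOrder α] [TopologicalSpace α] [OrderTopology α] [DenselyOrdered α]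
  [NoMinOrder α] [NoMaxOrder α] [TopologicalSpace β]
  [LinearOrder γ] [TopologicalSpace γ] [OrderClosedTopology γ]
  {U : Set (α × β)} {f : α × β → γ}

/-- Openness comes from the intermediate value theorem: two points of a fibre enclosing `z` keep
enclosing its value `f z` on the neighbouring fibres. -/
lemma isOpenMap_restrict_prodMk_snd_of_strictMonoOn (hU : IsOpen U) (hf : ContinuousOn f U)
    (hmono : ∀ h, StrictMonoOn (fun x => f (x, h)) {x | (x, h) ∈ U}) :
    IsOpenMap (U.domRestrict fun z => (f z, z.2)) := by
  rw [isOpenMap_iff_nhds_le]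
  rintro ⟨⟨x₀, h₀⟩, hz⟩ S hS
  rw [mem_map, nhds_subtype_eq_comap, mem_comap] at hS
  obtain ⟨W, hW, hWS⟩ := hS
  obtain ⟨A, hA, B, hB, hAB⟩ := mem_nhds_prod_iff.1 (inter_mem hW (hU.mem_nhds hz))
  obtain ⟨a₁, b₁, hx₀, hIA⟩ := mem_nhds_iff_exists_Ioo_subset.1 hA
  obtain ⟨a, ha₁, hax⟩ := exists_between hx₀.1
  obtain ⟨b, hxb, hb₁⟩ := exists_between hx₀.2
  have hbox : ∀ x ∈ Icc a b, ∀ h ∈ B, (x, h) ∈ W ∩ U := fun x hx h hh =>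
    hAB ⟨hIA ⟨ha₁.trans_le hx.1, hx.2.trans_lt hb₁⟩, hh⟩
  have hh₀ : h₀ ∈ B := mem_of_mem_nhds hB
  have hvert (x : α) (hx : x ∈ Icc a b) :
      Tendsto (fun p : γ × β => f (x, p.2)) (𝓝 (f (x₀, h₀), h₀)) (𝓝 (f (x, h₀))) :=
    (hf.continuousAt (hU.mem_nhds (hbox x hx h₀ hh₀).2)).tendsto.comp
      (Continuous.tendsto' (by fun_prop) _ _ rfl)
  have hfst : Tendsto Prod.fst (𝓝 (f (x₀, h₀), h₀)) (𝓝 (f (x₀, h₀))) := continuous_fst.tendsto _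
  have ha : a ∈ Icc a b := ⟨le_rfl, (hax.trans hxb).le⟩
  have hb : b ∈ Icc a b := ⟨(hax.trans hxb).le, le_rfl⟩
  have hlower := (hvert a ha).eventually_lt hfst (hmono h₀ (hbox a ha h₀ hh₀).2 hz hax)
  have hupper := hfst.eventually_lt (hvert b hb) (hmono h₀ hz (hbox b hb h₀ hh₀).2 hxb)
  filter_upwards [hlower, hupper, continuous_snd.tendsto (f (x₀, h₀), h₀) hB]
    with ⟨v, h⟩ hav hvb hh
  obtain ⟨x, hx, rfl⟩ := intermediate_value_Icc ha.2
    (hf.comp (by fun_prop) fun x hx => (hbox x hx h hh).2) ⟨hav.le, hvb.le⟩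
  exact @hWS ⟨(x, h), (hbox x hx h hh).2⟩ (hbox x hx h hh).1

lemma exists_openPartialHomeomorph_prodMk_snd [Nonempty α] [Nonempty β] (hU : IsOpen U)
    (hf : ContinuousOn f U)
    (hmono : ∀ h, StrictMonoOn (fun x => f (x, h)) {x | (x, h) ∈ U}) :
    ∃ e : OpenPartialHomeomorph (α × β) (γ × β), e.source = U ∧ ∀ z, e z = (f z, z.2) := by
  have hinj : InjOn (fun z => (f z, z.2)) U := by
    rintro ⟨x, h⟩ hx ⟨x', h'⟩ hx' heq
    obtain ⟨hfx, rfl⟩ := Prod.mk.inj heq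
    rw [(hmono h).injOn hx hx' hfx]
  exact ⟨.ofContinuousOpenRestrict (hinj.toPartialEquiv _ _) (hf.prodMk continuousOn_snd)
    (isOpenMap_restrict_prodMk_snd_of_strictMonoOn hU hf hmono) hU, rfl, fun _ => rfl⟩

lemma exists_openPartialHomeomorph_fst_prodMk [Nonempty α] [Nonempty β] {U : Set (β × α)}
    {f : β × α → γ} (hU : IsOpen U) (hf : ContinuousOn f U)
    (hmono : ∀ x, StrictMonoOn (fun h => f (x, h)) {h | (x, h) ∈ U}) :
    ∃ e : OpenPartialHomeomorph (β × α) (β × γ), e.source = U ∧ ∀ z, e z = (z.1, f z) := by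
  obtain ⟨e, hsource, he⟩ := exists_openPartialHomeomorph_prodMk_snd (f := f ∘ Prod.swap)
    (hU.preimage continuous_swap) (hf.comp continuous_swap.continuousOn fun _ hz => hz) hmono
  refine ⟨((Homeomorph.prodComm β α).toOpenPartialHomeomorph.trans e).trans
    (Homeomorph.prodComm γ β).toOpenPartialHomeomorph, ?_, fun z => ?_⟩
  · ext z
    simp [hsource]
  · simp [he]

end FiberwiseMonotone

section Leaves

open Set Filter Topology Metric
open scoped NNReal

variable {E : Type*} [NormedAddCommGroup E] [NormedSpace ℝ E]

lemma eqOn_of_isIntegralCurveOn {v : ℝ → E → E} {s : ℝ → Set E} {K : ℝ≥0} {J : Set ℝ}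
    (hJ : J.OrdConnected) (hv : ∀ t ∈ J, LipschitzOnWith K (v t) (s t)) {f g : ℝ → E}
    (hf : IsIntegralCurveOn f v J) (hfs : ∀ t ∈ J, f t ∈ s t)
    (hg : IsIntegralCurveOn g v J) (hgs : ∀ t ∈ J, g t ∈ s t)
    {t₀ : ℝ} (ht₀ : t₀ ∈ J) (heq : f t₀ = g t₀) : EqOn f g J := by
  intro t₁ ht₁
  rcases le_total t₀ t₁ with h | h
  · have hsub : Icc t₀ t₁ ⊆ J := hJ.out ht₀ ht₁
    have hderiv {w : ℝ → E} (hw : IsIntegralCurveOn w v J) (t : ℝ) (ht : t ∈ Ico t₀ t₁) :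
        HasDerivWithinAt w (v t (w t)) (Ici t) t :=
      (hw.mono hsub t (Ico_subset_Icc_self ht)).mono_of_mem_nhdsWithin
        (mem_of_superset (Icc_mem_nhdsGE ht.2) (Icc_subset_Icc_left ht.1))
    have hsub' := Ico_subset_Icc_self.trans hsub
    exact ODE_solution_unique_of_mem_Icc_right (fun t ht => hv t (hsub' ht))
      (hf.continuousOn.mono hsub) (hderiv hf) (fun t ht => hfs t (hsub' ht))
      (hg.continuousOn.mono hsub) (hderiv hg) (fun t ht => hgs t (hsub' ht))
      heq (right_mem_Icc.2 h)
  · have hsub : Icc t₁ t₀ ⊆ J := hJ.out ht₁ ht₀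
    have hderiv {w : ℝ → E} (hw : IsIntegralCurveOn w v J) (t : ℝ) (ht : t ∈ Ioc t₁ t₀) :
        HasDerivWithinAt w (v t (w t)) (Iic t) t :=
      (hw.mono hsub t (Ioc_subset_Icc_self ht)).mono_of_mem_nhdsWithin
        (mem_of_superset (Icc_mem_nhdsLE ht.1) (Icc_subset_Icc_right ht.2))
    have hsub' := Ioc_subset_Icc_self.trans hsub
    exact ODE_solution_unique_of_mem_Icc_left (fun t ht => hv t (hsub' ht))
      (hf.continuousOn.mono hsub) (hderiv hf) (fun t ht => hfs t (hsub' ht))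
      (hg.continuousOn.mono hsub) (hderiv hg) (fun t ht => hgs t (hsub' ht))
      heq (left_mem_Icc.2 h)

lemma lipschitzOnWith_prodMk_left {α β γ : Type*} [PseudoEMetricSpace α] [PseudoEMetricSpace β]
    [PseudoEMetricSpace γ] {K : ℝ≥0} {f : α × β → γ} {N : Set (α × β)} (hf : LipschitzOnWith K f N)
    (x : α) :
    LipschitzOnWith K (fun y => f (x, y)) {y | (x, y) ∈ N} := by
  have h := hf.comp (LipschitzWith.prodMk_left x).lipschitzOnWith fun y (hy : (x, y) ∈ N) => hy
  rwa [mul_one] at h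

/-- A continuous family of leaves of the slope field `f`: for `h ∈ H`, the graph of `u (·, h)` over
the interval `I` is the integral curve of `y' = f (x, y)` through `(x₀, h)`, and it stays in `N`. -/
structure IsLeafFamily (f : ℝ × E → E) (N : Set (ℝ × E)) (x₀ : ℝ) (I : Set ℝ) (H : Set E)
    (u : ℝ × E → E) : Prop where
  isOpen_base : IsOpen I
  ordConnected_base : I.OrdConnected
  base_mem : x₀ ∈ I
  isOpen_heights : IsOpen H
  continuousOn : ContinuousOn u (I ×ˢ H)
  apply_base : ∀ h ∈ H, u (x₀, h) = h
  graph_mem : ∀ x ∈ I, ∀ h ∈ H, (x, u (x, h)) ∈ N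
  hasDerivAt : ∀ x ∈ I, ∀ h ∈ H, HasDerivAt (fun x => u (x, h)) (f (x, u (x, h))) x

lemma exists_leaves_continuousOn [CompleteSpace E] {f : ℝ × E → E} {x₀ : ℝ} {y₀ : E}
    (hf : ContDiffAt ℝ 1 f (x₀, y₀)) :
    ∃ u : ℝ × E → E, ∃ ε > 0, ∃ r > 0,
      ContinuousOn u (Icc (x₀ - ε) (x₀ + ε) ×ˢ closedBall y₀ r) ∧
      ∀ h ∈ closedBall y₀ r, u (x₀, h) = h ∧
        IsIntegralCurveOn (fun x => u (x, h)) (fun x y => f (x, y)) (Icc (x₀ - ε) (x₀ + ε)) := by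
  have hflow : ContDiffAt ℝ 1 (fun z : ℝ × E => ((1 : ℝ), f z)) (x₀, y₀) :=
    contDiffAt_const.prodMk hf
  obtain ⟨ε, hε, a, r, L, K, hr, hPL⟩ := IsPicardLindelof.of_contDiffAt_one hflow
  obtain ⟨φ, hφ, hφc⟩ := (hPL x₀).exists_forall_mem_closedBall_eq_hasDerivWithinAt_continuousOn
  have hball (h : E) (hh : h ∈ closedBall y₀ r) : (x₀, h) ∈ closedBall (x₀, y₀) (r : ℝ) := by
    simpa [Prod.dist_eq] using hh
  have hfst (h : E) (hh : h ∈ closedBall y₀ r) :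
      EqOn (fun x => (φ ((x₀, h), x)).1) id (Icc (x₀ - ε) (x₀ + ε)) :=
    eqOn_of_isIntegralCurveOn (v := fun _ _ => 1) (s := fun _ => univ) ordConnected_Icc
      (fun _ _ => (LipschitzWith.const 1).lipschitzOnWith)
      (fun x hx => ((hφ _ (hball h hh)).2 x hx).fst) (fun _ _ => mem_univ _)
      (fun x _ => hasDerivWithinAt_id x _) (fun _ _ => mem_univ _)
      (t₀ := x₀) ⟨by linarith, by linarith⟩ (congrArg Prod.fst (hφ _ (hball h hh)).1)
  refine ⟨fun z => (φ ((x₀, z.2), z.1)).2, ε, hε, r, hr, ?_, fun h hh => ⟨?_, fun x hx => ?_⟩⟩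
  · exact continuous_snd.comp_continuousOn
      (hφc.comp (by fun_prop) fun z hz => ⟨hball z.2 hz.2, hz.1⟩)
  · exact congrArg Prod.snd (hφ _ (hball h hh)).1
  · have hx' : (φ ((x₀, h), x)).1 = x := hfst h hh hx
    have hsnd := ((hφ _ (hball h hh)).2 x hx).snd
    rwa [← Prod.mk.eta (p := φ ((x₀, h), x)), hx'] at hsnd

lemma exists_isLeafFamily [CompleteSpace E] {f : ℝ × E → E} {N : Set (ℝ × E)} {x₀ : ℝ} {y₀ : E}
    (hf : ContDiffAt ℝ 1 f (x₀, y₀)) (hN : N ∈ 𝓝 (x₀, y₀)) :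
    ∃ I H u, y₀ ∈ H ∧ IsLeafFamily f N x₀ I H u := by
  obtain ⟨u, ε, hε, r, hr, hu, hleaf⟩ := exists_leaves_continuousOn hf
  set B : Set (ℝ × E) := Icc (x₀ - ε) (x₀ + ε) ×ˢ closedBall y₀ r
  have hB : B ∈ 𝓝 (x₀, y₀) :=
    prod_mem_nhds (Icc_mem_nhds (by linarith) (by linarith)) (closedBall_mem_nhds y₀ hr)
  have hgraph : Tendsto (fun z => (z.1, u z)) (𝓝 (x₀, y₀)) (𝓝 (x₀, y₀)) := by
    have h := (continuousAt_fst.prodMk (hu.continuousAt hB)).tendsto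
    rwa [(hleaf y₀ (mem_closedBall_self hr.le)).1] at h
  obtain ⟨A, hA, H, hHo, hy₀, hAH⟩ :
      ∃ A ∈ 𝓝 x₀, ∃ H, IsOpen H ∧ y₀ ∈ H ∧ A ×ˢ H ⊆ B ∩ (fun z => (z.1, u z)) ⁻¹' N := by
    obtain ⟨A, hA, H', hH', hsub⟩ := mem_nhds_prod_iff.1 (inter_mem hB (hgraph hN))
    obtain ⟨H, hHH', hHo, hy₀⟩ := _root_.mem_nhds_iff.1 hH'
    exact ⟨A, hA, H, hHo, hy₀, (prod_mono_right hHH').trans hsub⟩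
  obtain ⟨l, m, hx₀, hIA⟩ := mem_nhds_iff_exists_Ioo_subset.1 hA
  have hsub : Ioo l m ×ˢ H ⊆ B ∩ (fun z => (z.1, u z)) ⁻¹' N := (prod_mono_left hIA).trans hAH
  refine ⟨Ioo l m, H, u, hy₀, isOpen_Ioo, ordConnected_Ioo, hx₀, hHo,
    hu.mono fun z hz => (hsub hz).1, fun h hh => (hleaf h (hsub (mk_mem_prod hx₀ hh)).1.2).1,
    fun x hx h hh => (hsub (mk_mem_prod hx hh)).2, fun x hx h hh => ?_⟩
  have hcurve := (hleaf h (hsub (mk_mem_prod hx₀ hh)).1.2).2.mono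
    fun x' hx' => (hsub (mk_mem_prod hx' hh)).1.1
  exact (hcurve.isIntegralCurveAt (isOpen_Ioo.mem_nhds hx)).hasDerivAt

namespace IsLeafFamily

lemma lipschitzOnWith_leaf {f : ℝ × E → E} {N : Set (ℝ × E)} {x₀ : ℝ} {I : Set ℝ} {H : Set E}
    {u : ℝ × E → E} (hu : IsLeafFamily f N x₀ I H u) {L : ℝ≥0} (hL : ∀ z ∈ N, ‖f z‖₊ ≤ L) {h : E}
    (hh : h ∈ H) : LipschitzOnWith L (fun x => u (x, h)) I :=
  hu.ordConnected_base.convex.lipschitzOnWith_of_nnnorm_hasDerivWithin_le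
    (fun x hx => (hu.hasDerivAt x hx h hh).hasDerivWithinAt)
    fun x hx => hL _ (hu.graph_mem x hx h hh)

variable {f : ℝ × ℝ → ℝ} {N : Set (ℝ × ℝ)} {x₀ : ℝ} {I H : Set ℝ} {u : ℝ × ℝ → ℝ} {K : ℝ≥0}

lemma strictMonoOn_leaves (hu : IsLeafFamily f N x₀ I H u) (hf : LipschitzOnWith K f N) {x : ℝ}
    (hx : x ∈ I) : StrictMonoOn (fun h => u (x, h)) H := by
  intro h₁ hh₁ h₂ hh₂ hlt
  by_contra! hcross
  have hleaf (h : ℝ) (hh : h ∈ H) :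
      IsIntegralCurveOn (fun x => u (x, h)) (fun x y => f (x, y)) I :=
    fun x hx => (hu.hasDerivAt x hx h hh).hasDerivWithinAt
  obtain ⟨t, ht, hmeet⟩ := hu.ordConnected_base.isPreconnected.intermediate_value₂ hu.base_mem hx
    (hleaf h₁ hh₁).continuousOn (hleaf h₂ hh₂).continuousOn
    (by simpa only [hu.apply_base _ hh₁, hu.apply_base _ hh₂] using hlt.le) hcross
  have heq := eqOn_of_isIntegralCurveOn hu.ordConnected_base
    (fun x _ => lipschitzOnWith_prodMk_left hf x) (hleaf h₁ hh₁)
    (fun x hx => hu.graph_mem x hx h₁ hh₁) (hleaf h₂ hh₂) (fun x hx => hu.graph_mem x hx h₂ hh₂)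
    ht hmeet hu.base_mem
  simp only [hu.apply_base _ hh₁, hu.apply_base _ hh₂] at heq
  exact hlt.ne heq

lemma exists_chart (hu : IsLeafFamily f N x₀ I H u) (hf : LipschitzOnWith K f N) :
    ∃ G : OpenPartialHomeomorph (ℝ × ℝ) (ℝ × ℝ),
      G.source = I ×ˢ H ∧ ∀ z, G z = (z.1, u z) := by
  refine exists_openPartialHomeomorph_fst_prodMk (hu.isOpen_base.prod hu.isOpen_heights)
    hu.continuousOn fun x h₁ hh₁ h₂ hh₂ hlt => ?_
  exact hu.strictMonoOn_leaves hf hh₁.1 hh₁.2 hh₂.2 hlt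

end IsLeafFamily
end Leaves

section RealLine

open Set Filter
open scoped NNReal

lemma mul_lt_mul_iff_of_strictMonoOn {R : Type*} [Ring R] [LinearOrder R] [IsStrictOrderedRing R]
    {f : R → R} {s : Set R} (hf : StrictMonoOn f s) {c : R} (hc : c ≠ 0) {x y : R} (hx : x ∈ s)
    (hy : y ∈ s) : c * f x < c * f y ↔ c * x < c * y := by
  rcases hc.lt_or_gt with hc | hc
  · rw [mul_lt_mul_left_of_neg hc, mul_lt_mul_left_of_neg hc, hf.lt_iff_lt hy hx]
  · rw [mul_lt_mul_iff_right₀ hc, mul_lt_mul_iff_right₀ hc, hf.lt_iff_lt hx hy]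

/-- Separation of variables for `x' = g x`: the time `T` is a primitive of `1 / g`, and the solution
`θ` is its inverse. -/
lemma exists_time_solution {I : Set ℝ} (hI : IsOpen I) (hI' : I.OrdConnected) {g : ℝ → ℝ}
    (hg : ContinuousOn g I) {c : ℝ} (hpos : ∀ x ∈ I, 0 < c * g x) :
    ∃ T θ : ℝ → ℝ, ContinuousOn T I ∧ (∀ x ∈ I, ∀ y ∈ I, c * x < c * y → T x < T y) ∧
      LeftInvOn θ T I ∧ ∀ x ∈ I, HasDerivAt θ (g x) (T x) := by
  rcases I.eq_empty_or_nonempty with rfl | ⟨x₀, hx₀⟩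
  · exact ⟨id, id, by simp [LeftInvOn]⟩
  have hc : c ≠ 0 := left_ne_zero_of_mul (hpos x₀ hx₀).ne'
  have hg0 : ∀ x ∈ I, g x ≠ 0 := fun x hx => right_ne_zero_of_mul (hpos x hx).ne'
  have hinv : ContinuousOn (fun x => (g x)⁻¹) I := hg.inv₀ hg0
  set T : ℝ → ℝ := fun x => ∫ s in x₀..x, (g s)⁻¹
  have hT : ∀ x ∈ I, HasStrictDerivAt T (g x)⁻¹ x := fun x hx =>
    intervalIntegral.integral_hasStrictDerivAt_right
      (hinv.mono (hI'.uIcc_subset hx₀ hx)).intervalIntegrable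
      (hinv.stronglyMeasurableAtFilter hI x hx) (hinv.continuousAt (hI.mem_nhds hx))
  have hTc : ContinuousOn T I := fun x hx => (hT x hx).hasDerivAt.continuousAt.continuousWithinAt
  have hmono : StrictMonoOn (fun x => c * T x) I := by
    refine strictMonoOn_of_hasDerivWithinAt_pos hI'.convex (hTc.const_smul c)
      (fun x hx => ((hT x (interior_subset hx)).hasDerivAt.const_mul c).hasDerivWithinAt)
      fun x hx => ?_
    have h := mul_pos (hpos x (interior_subset hx))
      (sq_pos_of_ne_zero (inv_ne_zero (hg0 x (interior_subset hx))))
    rwa [sq, mul_assoc, mul_inv_cancel_left₀ (hg0 x (interior_subset hx))] at h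
  have hinj : InjOn T I := fun x hx y hy h => hmono.injOn hx hy (congrArg (c * ·) h)
  refine ⟨T, Function.invFunOn T I, hTc, fun x hx y hy hxy => ?_, hinj.leftInvOn_invFunOn,
    fun x hx => ?_⟩
  · have h := (mul_lt_mul_iff_of_strictMonoOn hmono hc hx hy).2 hxy
    rwa [← mul_assoc, ← mul_assoc, mul_lt_mul_iff_right₀ (mul_self_pos.2 hc)] at h
  · have h := (hT x hx).to_local_left_inverse (inv_ne_zero (hg0 x hx))
      (mem_of_superset (hI.mem_nhds hx) hinj.leftInvOn_invFunOn)
    rw [inv_inv] at h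
    exact h.hasDerivAt

/-- The map pushing the points `x > 0` by `A 0 - A x` and the points `x < 0` by `A x - A 0`. It
moves the solutions of `|x| = A x` to the points `± A 0`. -/
def axisShift (A : ℝ → ℝ) (x : ℝ) : ℝ := x - A (max x 0) + A (min x 0)

namespace axisShift

variable {A : ℝ → ℝ} {I : Set ℝ} {q : ℝ≥0}

lemma apply_zero (A : ℝ → ℝ) : axisShift A 0 = 0 := by simp [axisShift]

lemma strictMonoOn (hA : LipschitzOnWith q A I) (hq : q < 1) (h0 : 0 ∈ I) :
    StrictMonoOn (axisShift A) I := by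
  intro x hx y hy hxy
  have hmax : |A (max y 0) - A (max x 0)| ≤ q * (max y 0 - max x 0) := by
    have h := hA.dist_le_mul _ (max_rec' (· ∈ I) hy h0) _ (max_rec' (· ∈ I) hx h0)
    rwa [Real.dist_eq, Real.dist_eq,
      abs_of_nonneg (sub_nonneg.2 (max_le_max_right 0 hxy.le))] at h
  have hmin : |A (min y 0) - A (min x 0)| ≤ q * (min y 0 - min x 0) := by
    have h := hA.dist_le_mul _ (min_rec' (· ∈ I) hy h0) _ (min_rec' (· ∈ I) hx h0)
    rwa [Real.dist_eq, Real.dist_eq,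
      abs_of_nonneg (sub_nonneg.2 (min_le_min_right 0 hxy.le))] at h
  have hgap : 0 < (1 - (q : ℝ)) * (y - x) :=
    mul_pos (sub_pos.2 (mod_cast hq)) (sub_pos.2 hxy)
  have hsum : (max y 0 - max x 0) + (min y 0 - min x 0) = y - x := by
    linarith [max_add_min x 0, max_add_min y 0]
  have hstep : (q : ℝ) * (max y 0 - max x 0) + q * (min y 0 - min x 0) = q * (y - x) := by
    rw [← mul_add, hsum]
  unfold axisShift
  linarith [(abs_le.1 hmax).2, (abs_le.1 hmin).1]

lemma abs_eq_iff (hA : LipschitzOnWith q A I) (hq : q < 1) (h0 : 0 ∈ I) {x : ℝ} (hx : x ∈ I)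
    (hx0 : x ≠ 0) : |axisShift A x| = A 0 ↔ |x| = A x := by
  have hmono := strictMonoOn hA hq h0
  rcases hx0.lt_or_gt with hneg | hpos
  · have hshift : axisShift A x < 0 := apply_zero A ▸ hmono hx h0 hneg
    rw [abs_of_neg hshift, abs_of_neg hneg, axisShift, max_eq_right hneg.le, min_eq_left hneg.le]
    constructor <;> intro h <;> linarith
  · have hshift : 0 < axisShift A x := apply_zero A ▸ hmono h0 hx hpos
    rw [abs_of_pos hshift, abs_of_pos hpos, axisShift, max_eq_left hpos.le, min_eq_right hpos.le]
    constructor <;> intro h <;> linarith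

lemma exists_chart {β : Type*} [TopologicalSpace β] [Nonempty β] {A : ℝ × β → ℝ} {H : Set β}
    (hI : IsOpen I) (hH : IsOpen H) (h0 : 0 ∈ I) (hA : ContinuousOn A (I ×ˢ H))
    (hlip : ∀ h ∈ H, LipschitzOnWith q (fun x => A (x, h)) I) (hq : q < 1) :
    ∃ S : OpenPartialHomeomorph (ℝ × β) (ℝ × β), S.source = I ×ˢ H ∧
      (∀ z, S z = (axisShift (fun x => A (x, z.2)) z.1, z.2)) ∧
      ∀ h, StrictMonoOn (fun x => (S (x, h)).1) {x | (x, h) ∈ S.source} := by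
  have hmono (h : β) : StrictMonoOn (axisShift fun x => A (x, h)) {x | (x, h) ∈ I ×ˢ H} :=
    fun x₁ hx₁ x₂ hx₂ hlt => strictMonoOn (hlip h hx₁.2) hq h0 hx₁.1 hx₂.1 hlt
  have hmax : MapsTo (fun z : ℝ × β => (max z.1 0, z.2)) (I ×ˢ H) (I ×ˢ H) :=
    fun z hz => ⟨max_rec' (· ∈ I) hz.1 h0, hz.2⟩
  have hmin : MapsTo (fun z : ℝ × β => (min z.1 0, z.2)) (I ×ˢ H) (I ×ˢ H) :=
    fun z hz => ⟨min_rec' (· ∈ I) hz.1 h0, hz.2⟩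
  have hcont : ContinuousOn (fun z : ℝ × β => axisShift (fun x => A (x, z.2)) z.1) (I ×ˢ H) :=
    (continuousOn_fst.sub (hA.comp (by fun_prop) hmax)).add (hA.comp (by fun_prop) hmin)
  obtain ⟨S, hsource, hS⟩ := exists_openPartialHomeomorph_prodMk_snd (hI.prod hH) hcont hmono
  refine ⟨S, hsource, hS, fun h => ?_⟩
  simp only [hsource, hS]
  exact hmono h

end axisShift

end RealLine

section OrbitArcs

open Set

/-- `w` parametrizes, over the interval `J`, an oriented arc of an orbit of `X` in `V`: it is a
phase curve of `X` in `V` up to a continuous strictly increasing change of time. -/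
def IsOrbitArc (X : ℝ × ℝ → ℝ × ℝ) (V : Set (ℝ × ℝ)) (J : Set ℝ) (w : ℝ → ℝ × ℝ) : Prop :=
  ∃ (J' : Set ℝ) (d : ℝ → ℝ × ℝ) (τ : ℝ → ℝ),
    IsPhaseCurve X V J' d ∧ ContinuousOn τ J ∧ StrictMonoOn τ J ∧ τ '' J = J' ∧
      ∀ t ∈ J, w t = d (τ t)

/-- `w` runs, over the interval `J`, along a horizontal line of the plane: to the right if `σ > 0`,
to the left if `σ < 0`. -/
structure IsHorizontalArc (σ : ℝ) (J : Set ℝ) (w : ℝ → ℝ × ℝ) : Prop where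
  ordConnected : J.OrdConnected
  nontrivial : J.Nontrivial
  continuousOn : ContinuousOn w J
  strictMonoOn : StrictMonoOn (fun t => σ * (w t).1) J
  snd_eq : ∀ s ∈ J, ∀ t ∈ J, (w s).2 = (w t).2

lemma isImage_trans {α β γ : Type*} [TopologicalSpace α] [TopologicalSpace β] [TopologicalSpace γ]
    {e : OpenPartialHomeomorph α β} {e' : OpenPartialHomeomorph β γ} {s : Set α} {t : Set β}
    {u : Set γ} (h : e.IsImage s t) (h' : e'.IsImage t u) : (e.trans e').IsImage s u :=
  fun _ hx => (h'.apply_mem_iff hx.2).trans (h.apply_mem_iff hx.1)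

/-- The chart `e` straightens the orbits of `X`: it maps them to horizontal lines, oriented to the
right if `σ > 0` and to the left if `σ < 0`, and every horizontal arc in its target comes from an
orbit. -/
structure StraightensOrbits (X : ℝ × ℝ → ℝ × ℝ) (σ : ℝ)
    (e : OpenPartialHomeomorph (ℝ × ℝ) (ℝ × ℝ)) : Prop where
  isHorizontalArc : ∀ J c, IsPhaseCurve X e.source J c → IsHorizontalArc σ J (e ∘ c)
  isOrbitArc : ∀ J w, MapsTo w J e.target → IsHorizontalArc σ J w →
    IsOrbitArc X e.source J (e.symm ∘ w)

variable {X Y : ℝ × ℝ → ℝ × ℝ} {σ : ℝ} {V W : Set (ℝ × ℝ)} {J : Set ℝ} {c w : ℝ → ℝ × ℝ}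

namespace IsPhaseCurve

lemma continuousOn (hc : IsPhaseCurve X V J c) : ContinuousOn c J :=
  fun t ht => (hc.2.2.2 t ht).continuousWithinAt

lemma of_mapsTo (hc : IsPhaseCurve X V J c) (hW : MapsTo c J W) : IsPhaseCurve X W J c :=
  ⟨hc.1, hc.2.1, hW, hc.2.2.2⟩

lemma mono (hc : IsPhaseCurve X V J c) (hVW : V ⊆ W) : IsPhaseCurve X W J c :=
  hc.of_mapsTo fun t ht => hVW (hc.2.2.1 t ht)

lemma hasDerivWithinAt_fst (hc : IsPhaseCurve X V J c) {t : ℝ} (ht : t ∈ J) :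
    HasDerivWithinAt (fun t => (c t).1) (X (c t)).1 J t :=
  (hc.2.2.2 t ht).fst

lemma hasDerivWithinAt_snd (hc : IsPhaseCurve X V J c) {t : ℝ} (ht : t ∈ J) :
    HasDerivWithinAt (fun t => (c t).2) (X (c t)).2 J t :=
  (hc.2.2.2 t ht).snd

end IsPhaseCurve

lemma IsOrbitArc.of_mapsTo (hw : IsOrbitArc X V J w) (hW : MapsTo w J W) : IsOrbitArc X W J w := by
  obtain ⟨J', d, τ, hd, hτ, hmono, rfl, heq⟩ := hw
  refine ⟨τ '' J, d, τ, hd.of_mapsTo ?_, hτ, hmono, rfl, heq⟩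
  rintro _ ⟨t, ht, rfl⟩
  exact heq t ht ▸ hW ht

namespace StraightensOrbits

variable {e e' : OpenPartialHomeomorph (ℝ × ℝ) (ℝ × ℝ)}

lemma trans_of_strictMonoOn {S : OpenPartialHomeomorph (ℝ × ℝ) (ℝ × ℝ)}
    (he : StraightensOrbits X σ e) (hσ : σ ≠ 0) (hsnd : ∀ z ∈ S.source, (S z).2 = z.2)
    (hmono : ∀ h, StrictMonoOn (fun x => (S (x, h)).1) {x | (x, h) ∈ S.source}) :
    StraightensOrbits X σ (e.trans S) := by
  have hlt {z z' : ℝ × ℝ} (hz : z ∈ S.source) (hz' : z' ∈ S.source) (hfib : z.2 = z'.2) :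
      σ * (S z).1 < σ * (S z').1 ↔ σ * z.1 < σ * z'.1 := by
    obtain ⟨x, h⟩ := z
    obtain ⟨x', h'⟩ := z'
    obtain rfl : h = h' := hfib
    exact mul_lt_mul_iff_of_strictMonoOn (hmono h) hσ hz hz'
  refine ⟨fun J c hc => ?_, fun J w hw harc => ?_⟩
  · have hS (t : ℝ) (ht : t ∈ J) : e (c t) ∈ S.source := (hc.2.2.1 t ht).2
    have harc := he.isHorizontalArc J c (hc.mono inter_subset_left)
    refine ⟨harc.ordConnected, harc.nontrivial, S.continuousOn.comp harc.continuousOn hS,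
      fun s hs t ht hst => ?_, fun s hs t ht => ?_⟩
    · exact (hlt (hS s hs) (hS t ht) (harc.snd_eq s hs t ht)).2 (harc.strictMonoOn hs ht hst)
    · exact (hsnd _ (hS s hs)).trans ((harc.snd_eq s hs t ht).trans (hsnd _ (hS t ht)).symm)
  · rw [OpenPartialHomeomorph.trans_target] at hw
    have hS (t : ℝ) (ht : t ∈ J) : S.symm (w t) ∈ S.source := S.map_target (hw ht).1
    have hsnd_symm (t : ℝ) (ht : t ∈ J) : (S.symm (w t)).2 = (w t).2 := by
      rw [← hsnd _ (hS t ht), S.right_inv (hw ht).1]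
    have hsnd_eq (s : ℝ) (hs : s ∈ J) (t : ℝ) (ht : t ∈ J) :
        (S.symm (w s)).2 = (S.symm (w t)).2 := by
      rw [hsnd_symm s hs, hsnd_symm t ht, harc.snd_eq s hs t ht]
    have harc' : IsHorizontalArc σ J (S.symm ∘ w) := by
      refine ⟨harc.ordConnected, harc.nontrivial,
        S.symm.continuousOn.comp harc.continuousOn fun t ht => (hw ht).1,
        fun s hs t ht hst => ?_, hsnd_eq⟩
      refine (hlt (hS s hs) (hS t ht) (hsnd_eq s hs t ht)).1 ?_
      rw [S.right_inv (hw hs).1, S.right_inv (hw ht).1]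
      exact harc.strictMonoOn hs ht hst
    exact (he.isOrbitArc J _ (fun t ht => (hw ht).2) harc').of_mapsTo
      fun t ht => (e.trans S).map_target (by rw [OpenPartialHomeomorph.trans_target]; exact hw ht)

lemma isOrbitArc_trans_symm {Z Z' T : Set (ℝ × ℝ)} (he : StraightensOrbits X σ e)
    (he' : StraightensOrbits Y σ e') (heZ : e.IsImage Z T) (heZ' : e'.IsImage Z' T)
    (hc : IsPhaseCurve X ((e.trans e'.symm).source \ Z) J c) :
    IsOrbitArc Y ((e.trans e'.symm).target \ Z') J (e.trans e'.symm ∘ c) := by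
  have harc := he.isHorizontalArc J c (hc.mono (sdiff_subset.trans inter_subset_left))
  refine (he'.isOrbitArc J _ (fun t ht => (hc.2.2.1 t ht).1.2) harc).of_mapsTo fun t ht => ?_
  obtain ⟨hsource, hZ⟩ := hc.2.2.1 t ht
  exact ⟨(e.trans e'.symm).map_source hsource,
    ((isImage_trans heZ heZ'.symm).apply_mem_iff hsource).not.2 hZ⟩

end StraightensOrbits

lemma orbitallyEquivAt_of_straightensOrbits {e e' : OpenPartialHomeomorph (ℝ × ℝ) (ℝ × ℝ)}
    {δ γ : ℝ × ℝ → ℝ} {T : Set (ℝ × ℝ)} {p p' : ℝ × ℝ} (he : StraightensOrbits X σ e)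
    (he' : StraightensOrbits Y σ e') (heT : e.IsImage {z | δ z = 0} T)
    (heT' : e'.IsImage {z | γ z = 0} T) (hp : p ∈ e.source) (hp' : p' ∈ e'.source)
    (hpp' : e p = e' p') : OrbitallyEquivAt X δ p Y γ p' := by
  set F := e.trans e'.symm
  have hpF : p ∈ F.source := ⟨hp, (hpp' ▸ e'.map_source hp' : e p ∈ e'.target)⟩
  have hFp : F p = p' := by
    rw [OpenPartialHomeomorph.coe_trans, Function.comp_apply, hpp', e'.left_inv hp']
  have hsymm : F.symm = e'.trans e.symm := by
    rw [OpenPartialHomeomorph.trans_symm_eq_symm_trans_symm, OpenPartialHomeomorph.symm_symm]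
  refine ⟨F.source, F.target, F, F.symm, F.open_source, F.open_target, hpF,
    hFp ▸ F.map_source hpF, F.continuousOn, F.symm.continuousOn, F.mapsTo, F.symm.mapsTo,
    fun z hz => F.left_inv hz, fun z hz => F.right_inv hz, hFp, ?_,
    fun J c hc => he.isOrbitArc_trans_symm he' heT heT' hc, fun J d hd => ?_⟩
  · rw [inter_comm, (isImage_trans heT heT'.symm).image_eq, inter_comm]
  · rw [← F.symm_source, hsymm] at hd
    rw [← F.symm_target, hsymm]
    exact he'.isOrbitArc_trans_symm he heT' heT hd

end OrbitArcs

section StraighteningChart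

open Set Filter Topology
open scoped NNReal

/-- The slope of the orbits of `X`, whose leaves `y = y(x)` solve `y' = leafSlope X (x, y)`. It has
the junk value `0` where `X` is vertical. -/
noncomputable def leafSlope (X : ℝ × ℝ → ℝ × ℝ) (z : ℝ × ℝ) : ℝ := (X z).2 / (X z).1

/-- `X` is uniformly transverse to the vertical lines on `N`: its horizontal component has the sign
of `σ` and is bounded by `M`, and the slope of its orbits is bounded by `L` and `K`-Lipschitz. -/
structure IsTransverseOn (X : ℝ × ℝ → ℝ × ℝ) (σ : ℝ) (K L M : ℝ≥0) (N : Set (ℝ × ℝ)) : Prop where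
  continuousOn_fst : ContinuousOn (fun z => (X z).1) N
  mul_fst_pos : ∀ z ∈ N, 0 < σ * (X z).1
  nnnorm_fst_le : ∀ z ∈ N, ‖(X z).1‖₊ ≤ M
  nnnorm_leafSlope_le : ∀ z ∈ N, ‖leafSlope X z‖₊ ≤ L
  lipschitzOnWith_leafSlope : LipschitzOnWith K (leafSlope X) N

variable {X : ℝ × ℝ → ℝ × ℝ} {σ : ℝ} {K L M κ : ℝ≥0} {N : Set (ℝ × ℝ)} {x₀ : ℝ} {I H J s : Set ℝ}
  {u : ℝ × ℝ → ℝ} {a : ℝ → ℝ} {δ : ℝ × ℝ → ℝ} {c w : ℝ → ℝ × ℝ}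

lemma contDiffAt_leafSlope {n : WithTop ℕ∞} {p : ℝ × ℝ} (hX : ContDiffAt ℝ n X p)
    (hp : (X p).1 ≠ 0) : ContDiffAt ℝ n (leafSlope X) p :=
  hX.snd.div hX.fst hp

namespace IsTransverseOn

lemma mono {N' : Set (ℝ × ℝ)} (hX : IsTransverseOn X σ K L M N) (hN : N' ⊆ N) :
    IsTransverseOn X σ K L M N' where
  continuousOn_fst := hX.continuousOn_fst.mono hN
  mul_fst_pos z hz := hX.mul_fst_pos z (hN hz)
  nnnorm_fst_le z hz := hX.nnnorm_fst_le z (hN hz)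
  nnnorm_leafSlope_le z hz := hX.nnnorm_leafSlope_le z (hN hz)
  lipschitzOnWith_leafSlope := hX.lipschitzOnWith_leafSlope.mono hN

lemma fst_mul_leafSlope (hX : IsTransverseOn X σ K L M N) {z : ℝ × ℝ} (hz : z ∈ N) :
    (X z).1 * leafSlope X z = (X z).2 :=
  mul_div_cancel₀ _ (right_ne_zero_of_mul (hX.mul_fst_pos z hz).ne')

lemma strictMonoOn_mul_fst (hX : IsTransverseOn X σ K L M N) (hc : IsPhaseCurve X N J c) :
    StrictMonoOn (fun t => σ * (c t).1) J :=
  strictMonoOn_of_hasDerivWithinAt_pos hc.1.convex (hc.continuousOn.fst.const_smul σ)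
    (fun _ ht =>
      ((hc.hasDerivWithinAt_fst (interior_subset ht)).mono interior_subset).const_mul σ)
    fun t ht => hX.mul_fst_pos _ (hc.2.2.1 t (interior_subset ht))

end IsTransverseOn

lemma exists_isTransverseOn {p : ℝ × ℝ} (hX : ContDiffAt ℝ 1 X p) (hp : 0 < σ * (X p).1) :
    ∃ K L M, ∃ N ∈ 𝓝 p, IsTransverseOn X σ K L M N := by
  have hslope := contDiffAt_leafSlope hX (right_ne_zero_of_mul hp.ne')
  obtain ⟨K, N, hN, hK⟩ := hslope.exists_lipschitzOnWith
  have hfst : ContinuousAt (fun z => (X z).1) p := hX.continuousAt.fst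
  refine ⟨K, ‖leafSlope X p‖₊ + 1, ‖(X p).1‖₊ + 1, {z | z ∈ N ∧ ContDiffAt ℝ 1 X z ∧
    0 < σ * (X z).1 ∧ ‖leafSlope X z‖₊ < ‖leafSlope X p‖₊ + 1 ∧ ‖(X z).1‖₊ < ‖(X p).1‖₊ + 1},
    ?_, ?_⟩
  · filter_upwards [hN, hX.eventually (by simp), (hfst.const_mul σ).eventually (lt_mem_nhds hp),
      hslope.continuousAt.nnnorm.eventually (gt_mem_nhds (lt_add_one _)),
      hfst.nnnorm.eventually (gt_mem_nhds (lt_add_one _))]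
      with z hzN hzX hzσ hzL hzM using ⟨hzN, hzX, hzσ, hzL, hzM⟩
  · exact ⟨fun z hz => hz.2.1.continuousAt.fst.continuousWithinAt, fun z hz => hz.2.2.1,
      fun z hz => hz.2.2.2.2.le, fun z hz => hz.2.2.2.1.le, hK.mono fun z hz => hz.1⟩

namespace IsLeafFamily

lemma apply_eq_snd_of_isPhaseCurve (hu : IsLeafFamily (leafSlope X) N x₀ I H u)
    (hX : IsTransverseOn X σ K L M N) (hc : IsPhaseCurve X N J c) (hI : ∀ t ∈ J, (c t).1 ∈ I)
    {h : ℝ} (hh : h ∈ H) {t₀ : ℝ} (ht₀ : t₀ ∈ J) (heq : u ((c t₀).1, h) = (c t₀).2) {t : ℝ}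
    (ht : t ∈ J) : u ((c t).1, h) = (c t).2 := by
  have hcN : ∀ t ∈ J, c t ∈ N := hc.2.2.1
  refine eqOn_of_isIntegralCurveOn hc.1 (K := M * K) (s := fun t => {y | ((c t).1, y) ∈ N})
    (v := fun t y => (X (c t)).1 * leafSlope X ((c t).1, y)) (f := fun t => u ((c t).1, h))
    (g := fun t => (c t).2) ?_ ?_ (fun t ht => hu.graph_mem _ (hI t ht) h hh) ?_ hcN ht₀ heq ht
  · intro t ht
    exact ((lipschitzWith_smul (X (c t)).1).comp_lipschitzOnWith
      (lipschitzOnWith_prodMk_left hX.lipschitzOnWith_leafSlope (c t).1)).weaken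
      (mul_le_mul_left (hX.nnnorm_fst_le _ (hcN t ht)) K)
  · intro t ht
    exact (hu.hasDerivAt _ (hI t ht) h hh).scomp_hasDerivWithinAt t (hc.hasDerivWithinAt_fst ht)
  · intro t ht
    exact (hc.hasDerivWithinAt_snd ht).congr_deriv (hX.fst_mul_leafSlope (hcN t ht)).symm

lemma isOrbitArc_leaf (hu : IsLeafFamily (leafSlope X) N x₀ I H u)
    (hX : IsTransverseOn X σ K L M N) (hw : MapsTo w J (I ×ˢ H)) (harc : IsHorizontalArc σ J w) :
    IsOrbitArc X univ J fun t => ((w t).1, u (w t)) := by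
  obtain ⟨t₀, ht₀⟩ := harc.nontrivial.nonempty
  set h := (w t₀).2
  have hh : h ∈ H := (hw ht₀).2
  have hleaf : ContinuousOn (fun x => (X (x, u (x, h))).1) I :=
    hX.continuousOn_fst.comp
      (continuousOn_id.prodMk fun x hx => (hu.hasDerivAt x hx h hh).continuousAt.continuousWithinAt)
      fun x hx => hu.graph_mem x hx h hh
  obtain ⟨T, θ, hT, hTlt, hθT, hθ⟩ := exists_time_solution hu.isOpen_base hu.ordConnected_base hleaf
    fun x hx => hX.mul_fst_pos _ (hu.graph_mem x hx h hh)
  set τ : ℝ → ℝ := fun t => T (w t).1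
  have hτ : ContinuousOn τ J := hT.comp harc.continuousOn.fst fun t ht => (hw ht).1
  have hτmono : StrictMonoOn τ J := fun s hs t ht hst =>
    hTlt _ (hw hs).1 _ (hw ht).1 (harc.strictMonoOn hs ht hst)
  have hθτ : ∀ t ∈ J, θ (τ t) = (w t).1 := fun t ht => hθT (hw ht).1
  refine ⟨τ '' J, fun s => (θ s, u (θ s, h)), τ,
    ⟨(harc.ordConnected.isPreconnected.image τ hτ).ordConnected,
      harc.nontrivial.image_of_injOn hτmono.injOn, fun _ _ => mem_univ _, ?_⟩,
    hτ, hτmono, rfl, fun t ht => ?_⟩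
  · rintro _ ⟨t, ht, rfl⟩
    have hderiv := hθ _ (hw ht).1
    have hslope := hu.hasDerivAt _ (hw ht).1 h hh
    rw [← hθτ t ht] at hslope
    have hprod := hderiv.prodMk (hslope.scomp (τ t) hderiv)
    rw [hθτ t ht, smul_eq_mul, hX.fst_mul_leafSlope (hu.graph_mem _ (hw ht).1 h hh)] at hprod
    simp only [hθτ t ht]
    exact hprod.hasDerivWithinAt
  · simp only [hθτ t ht]
    rw [show h = (w t).2 from harc.snd_eq t₀ ht₀ t ht]

lemma straightensOrbits_symm (hu : IsLeafFamily (leafSlope X) N x₀ I H u)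
    (hX : IsTransverseOn X σ K L M N) {G : OpenPartialHomeomorph (ℝ × ℝ) (ℝ × ℝ)}
    (hGs : G.source = I ×ˢ H) (hG : ∀ z, G z = (z.1, u z)) : StraightensOrbits X σ G.symm := by
  have hmaps : MapsTo G.symm G.target (I ×ˢ H) := hGs ▸ G.symm.mapsTo
  have hinv {z : ℝ × ℝ} (hz : z ∈ G.target) : ((G.symm z).1, u (G.symm z)) = z := by
    rw [← hG, G.right_inv hz]
  have hfst {z : ℝ × ℝ} (hz : z ∈ G.target) : (G.symm z).1 = z.1 := (Prod.mk.inj (hinv hz)).1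
  have htarget : G.target ⊆ N := fun z hz =>
    hinv hz ▸ hu.graph_mem _ (hmaps hz).1 _ (hmaps hz).2
  refine ⟨fun J c hc => ?_, fun J w hw harc => ?_⟩
  · have hcG : ∀ t ∈ J, c t ∈ G.target := hc.2.2.1
    refine ⟨hc.1, hc.2.1, G.symm.continuousOn.comp hc.continuousOn hcG,
      (hX.strictMonoOn_mul_fst (hc.mono htarget)).congr fun t ht => ?_, fun s hs t ht => ?_⟩
    · rw [Function.comp_apply, hfst (hcG t ht)]
    · have hleaf := hu.apply_eq_snd_of_isPhaseCurve hX (hc.mono htarget)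
        (fun t ht => hfst (hcG t ht) ▸ (hmaps (hcG t ht)).1) (hmaps (hcG s hs)).2 hs
        (by rw [← hfst (hcG s hs)]; exact (Prod.mk.inj (hinv (hcG s hs))).2) ht
      have hG' : G ((c t).1, (G.symm (c s)).2) = c t := by rw [hG, hleaf]
      have hmem : ((c t).1, (G.symm (c s)).2) ∈ G.source := by
        rw [hGs]
        exact ⟨hfst (hcG t ht) ▸ (hmaps (hcG t ht)).1, (hmaps (hcG s hs)).2⟩
      simp only [Function.comp_apply]
      rw [← hG', G.left_inv hmem]
  · have hleaf := hu.isOrbitArc_leaf hX (hGs ▸ hw) harc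
    simp only [← hG] at hleaf
    exact hleaf.of_mapsTo fun t ht => G.map_source (hw ht)

lemma impasse_axisShift_iff {f : ℝ × ℝ → ℝ} (hu : IsLeafFamily f N 0 I H u) {h : ℝ} (hh : h ∈ H)
    (ha : LipschitzOnWith κ (fun x => a (u (x, h))) I) (hκ : κ < 1)
    (hδ : ∀ z : ℝ × ℝ, z.1 ≠ 0 → (δ z = 0 ↔ |z.1| = a z.2)) {x : ℝ} (hx : x ∈ I) :
    δ (axisShift (fun x => a (u (x, h))) x, h) = 0 ↔ δ (x, u (x, h)) = 0 := by
  rcases eq_or_ne x 0 with rfl | hx0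
  · rw [axisShift.apply_zero, hu.apply_base h hh]
  · have hshift : axisShift (fun x => a (u (x, h))) x ≠ 0 := fun hzero =>
      hx0 <| (axisShift.strictMonoOn ha hκ hu.base_mem).injOn hx hu.base_mem
        (hzero.trans (axisShift.apply_zero _).symm)
    rw [hδ (x, _) hx0, hδ (axisShift (fun x => a (u (x, h))) x, h) hshift,
      ← axisShift.abs_eq_iff ha hκ hu.base_mem hx hx0, hu.apply_base h hh]

end IsLeafFamily

lemma exists_isTransverseOn_lipschitzOnWith {p : ℝ × ℝ} (hX : ContDiffAt ℝ 1 X p)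
    (hp : 0 < σ * (X p).1) (ha : HasStrictDerivAt a 0 p.2) :
    ∃ K L M κ s, ∃ N ∈ 𝓝 p, IsTransverseOn X σ K L M N ∧ (∀ z ∈ N, z.2 ∈ s) ∧
      LipschitzOnWith κ a s ∧ κ * L < 1 := by
  obtain ⟨K, L, M, N, hN, htrans⟩ := exists_isTransverseOn hX hp
  obtain ⟨κ, hκ, hκL⟩ : ∃ κ > 0, κ * L < 1 := by
    refine ⟨(L + 1)⁻¹, by positivity, ?_⟩
    rw [inv_mul_lt_one₀ (by positivity)]
    exact lt_add_one L
  obtain ⟨s, hs, hlip⟩ := ha.hasStrictFDerivAt.exists_lipschitzOnWith_of_nnnorm_lt κ (by simpa)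
  exact ⟨K, L, M, κ, s, N ∩ Prod.snd ⁻¹' s, inter_mem hN (continuousAt_snd hs),
    htrans.mono inter_subset_left, fun z hz => hz.2, hlip, hκL⟩

lemma exists_straightensOrbits (hX : ContDiffAt ℝ 1 X (0, 0)) (hσ : 0 < σ * (X (0, 0)).1)
    (ha : HasStrictDerivAt a 0 0) (hδ : ∀ z : ℝ × ℝ, z.1 ≠ 0 → (δ z = 0 ↔ |z.1| = a z.2)) :
    ∃ e : OpenPartialHomeomorph (ℝ × ℝ) (ℝ × ℝ), (0, 0) ∈ e.source ∧ e (0, 0) = (0, 0) ∧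
      e.IsImage {z | δ z = 0} {z | δ z = 0} ∧ StraightensOrbits X σ e := by
  obtain ⟨K, L, M, κ, s, N, hN, htrans, hNs, hlip, hκL⟩ :=
    exists_isTransverseOn_lipschitzOnWith hX hσ ha
  obtain ⟨I, H, u, h0, hu⟩ :=
    exists_isLeafFamily (contDiffAt_leafSlope hX (right_ne_zero_of_mul hσ.ne')) hN
  obtain ⟨G, hGs, hG⟩ := hu.exists_chart htrans.lipschitzOnWith_leafSlope
  have hauc : ContinuousOn (fun z => a (u z)) (I ×ˢ H) :=
    hlip.continuousOn.comp hu.continuousOn fun z hz => hNs _ (hu.graph_mem _ hz.1 _ hz.2)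
  have haul : ∀ h ∈ H, LipschitzOnWith (κ * L) (fun x => a (u (x, h))) I := fun h hh =>
    hlip.comp (hu.lipschitzOnWith_leaf htrans.nnnorm_leafSlope_le hh)
      fun x hx => hNs _ (hu.graph_mem x hx h hh)
  obtain ⟨S, hSs, hS, hSmono⟩ :=
    axisShift.exists_chart hu.isOpen_base hu.isOpen_heights hu.base_mem hauc haul hκL
  have h0G : (0, 0) ∈ G.source := hGs ▸ ⟨hu.base_mem, h0⟩
  have hG0 : G (0, 0) = (0, 0) := by rw [hG, hu.apply_base 0 h0]
  have hGsymm0 : G.symm (0, 0) = (0, 0) := by simpa only [hG0] using G.left_inv h0G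
  have h0S : G.symm (0, 0) ∈ S.source := by
    rw [hGsymm0, hSs]
    exact ⟨hu.base_mem, h0⟩
  refine ⟨G.symm.trans S, ⟨hG0 ▸ G.map_source h0G, h0S⟩, ?_, fun z hz => ?_,
    (hu.straightensOrbits_symm htrans hGs hG).trans_of_strictMonoOn (left_ne_zero_of_mul hσ.ne')
      (fun z _ => by rw [hS]) hSmono⟩
  · rw [OpenPartialHomeomorph.coe_trans, Function.comp_apply, hGsymm0, hS, axisShift.apply_zero]
  · have hw : G.symm z ∈ I ×ˢ H := hGs ▸ G.map_target hz.1
    have himpasse := hu.impasse_axisShift_iff hw.2 (haul _ hw.2) hκL hδ hw.1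
    rwa [← hS, ← hG, G.right_inv hz.1] at himpasse

lemma orbitallyEquivAt_of_impasse_iff_abs_eq {Y : ℝ × ℝ → ℝ × ℝ}
    (hX : ContDiffAt ℝ 1 X (0, 0)) (hY : ContDiffAt ℝ 1 Y (0, 0))
    (hXY : 0 < (X (0, 0)).1 * (Y (0, 0)).1) (ha : HasStrictDerivAt a 0 0)
    (hδ : ∀ z : ℝ × ℝ, z.1 ≠ 0 → (δ z = 0 ↔ |z.1| = a z.2)) :
    OrbitallyEquivAt X δ (0, 0) Y δ (0, 0) := by
  obtain ⟨e, hsource, h0, himage, hstraight⟩ :=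
    exists_straightensOrbits hX (mul_self_pos.2 (left_ne_zero_of_mul hXY.ne')) ha hδ
  obtain ⟨e', hsource', h0', himage', hstraight'⟩ := exists_straightensOrbits hY hXY ha hδ
  exact orbitallyEquivAt_of_straightensOrbits hstraight hstraight' himage himage' hsource hsource'
    (h0.trans h0'.symm)

end StraighteningChart

theorem Ak_case1_general {k : ℕ} (hk : 2 ≤ k) (ε : ℝ) {X Y : ℝ × ℝ → ℝ × ℝ}
    (hX : ContDiffAt ℝ 1 X (0, 0)) (hY : ContDiffAt ℝ 1 Y (0, 0))
    (hXY : 0 < (X (0, 0)).1 * (Y (0, 0)).1) :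
    OrbitallyEquivAt X (fun z => z.1 ^ 2 + ε * z.2 ^ (k + 1)) (0, 0)
      Y (fun z => z.1 ^ 2 + ε * z.2 ^ (k + 1)) (0, 0) := by
  refine orbitallyEquivAt_of_impasse_iff_abs_eq hX hY hXY
    (hasStrictDerivAt_sqrt_max_mul_pow (-ε) (Nat.succ_le_succ hk)) fun z hz => ?_
  rw [sq_add_eq_zero_iff_abs_eq_sqrt hz, neg_mul]

/-- (`A_k`-type impasse curve, `k ≥ 2`, Case 1 of Table 2.)
If `δ(x,y) = x² + ε·y^{k+1}` and `X = (P,Q)` is real-analytic near the origin with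
`P(0,0) ≠ 0`, then `(X, δ)` is orientation-preserving `C⁰`-orbitally equivalent at the origin
to the system with the constant adjoint vector field `(P(0,0), Q(0,0))` and the same `δ`. -/
theorem Ak_case1 (k : ℕ) (hk : 2 ≤ k) (ε : ℝ) (hε : ε = 1 ∨ ε = -1)
    (P Q : ℝ × ℝ → ℝ)
    (hP : AnalyticAt ℝ P (0, 0)) (hQ : AnalyticAt ℝ Q (0, 0))
    (hP0 : P (0, 0) ≠ 0) :
    OrbitallyEquivAt (fun z => (P z, Q z)) (fun z => z.1 ^ 2 + ε * z.2 ^ (k + 1)) (0, 0)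
      (fun _ => (P (0, 0), Q (0, 0))) (fun z => z.1 ^ 2 + ε * z.2 ^ (k + 1)) (0, 0) :=
  Ak_case1_general hk ε (hP.contDiffAt.prodMk hQ.contDiffAt) contDiffAt_const (mul_self_pos.2 hP0)
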